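/- Let n ≥ 1, let Φ: ℝⁿ → ℝ be a symmetric gauge function, let A ∈ ℂ^{n×n} be negative-imaginary (i.e., sectorial with all canonical phases in (−π,0]), and let 0 ≤ r ≤ n. Then the minimum of Φ(φ₁(E⁻¹AE⁻¹),…,φₙ(E⁻¹AE⁻¹)) over all sectorial matrices E ∈ ℂ^{n×n} such that prank(E) ≤ r and E⁻¹AE⁻¹ is negative-imaginary equals Φ(φ₁(A),…,φ_{n−r}(A),0,…,0), and this minimum is attained at every Ê such that Ê⁻¹ ∈ S_p(A⁻¹,r). -/

import Mathlib

noncomputable section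

open Matrix
open scoped Classical ComplexOrder

namespace LowPrank

variable {n : ℕ}

/-- A matrix is sectorial if its numerical range does not contain `0`
(`star x ⬝ᵥ x = 1` encodes `‖x‖₂ = 1`). -/
def IsSectorial (A : Matrix (Fin n) (Fin n) ℂ) : Prop :=
  ∀ x : Fin n → ℂ, star x ⬝ᵥ x = 1 → star x ⬝ᵥ A.mulVec x ≠ 0

/-- The diagonal unitary matrix `diag (e^{iφ₁}, …, e^{iφₙ})`. -/
def phaseDiag (φ : Fin n → ℝ) : Matrix (Fin n) (Fin n) ℂ :=
  Matrix.diagonal fun k => Complex.exp (Complex.I * (φ k : ℂ))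

/-- `A = Tᴴ diag (e^{iφ₁}, …, e^{iφₙ}) T` with `T` invertible. -/
def IsSectorialDecomp (A T : Matrix (Fin n) (Fin n) ℂ) (φ : Fin n → ℝ) : Prop :=
  IsUnit T ∧ A = Tᴴ * phaseDiag φ * T

/-- `φ` is the (sorted, normalized) vector of canonical phases of `A`:
nonincreasing, spread `< π`, midpoint of the range in `(-π, π]`, and realizing a
sectorial decomposition of `A`. -/
def IsCanonicalPhases (A : Matrix (Fin n) (Fin n) ℂ) (φ : Fin n → ℝ) : Prop :=
  Antitone φ ∧ (∀ i j, φ i - φ j < Real.pi) ∧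
    (-Real.pi < ((⨆ i, φ i) + ⨅ i, φ i) / 2) ∧ (((⨆ i, φ i) + ⨅ i, φ i) / 2 ≤ Real.pi) ∧
    ∃ T, IsSectorialDecomp A T φ

/-- The canonical phases `φ₁(A) ≥ ⋯ ≥ φₙ(A)` of a sectorial matrix
(`phases A k` is the `(k+1)`-st largest canonical phase). -/
noncomputable def phases (A : Matrix (Fin n) (Fin n) ℂ) : Fin n → ℝ :=
  if h : ∃ φ, IsCanonicalPhases A φ then h.choose else 0

/-- The phase-rank: the number of nonzero canonical phases. -/
noncomputable def prank (A : Matrix (Fin n) (Fin n) ℂ) : ℕ :=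
  {k : Fin n | phases A k ≠ 0}.ncard

/-- Positive-imaginary: sectorial with all canonical phases in `[0, π)`. -/
def PositiveImaginary (A : Matrix (Fin n) (Fin n) ℂ) : Prop :=
  IsSectorial A ∧ ∀ k, phases A k ∈ Set.Ico 0 Real.pi

/-- Symmetric gauge function. -/
structure IsSymmetricGauge (Φ : (Fin n → ℝ) → ℝ) : Prop where
  pos : ∀ x, x ≠ 0 → 0 < Φ x
  smul : ∀ (ρ : ℝ) (x), Φ (ρ • x) = |ρ| * Φ x
  subadd : ∀ x y, Φ (x + y) ≤ Φ x + Φ y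
  perm : ∀ (σ : Equiv.Perm (Fin n)) (x), Φ (x ∘ σ) = Φ x
  abs : ∀ x, Φ (fun k => |x k|) = Φ x

/-- The set `S_p(A, r)` of `r`-half-truncations of `A`. -/
def Sp (A : Matrix (Fin n) (Fin n) ℂ) (r : ℕ) : Set (Matrix (Fin n) (Fin n) ℂ) :=
  {E | ∃ T, IsSectorialDecomp A T (phases A) ∧
    E = Tᴴ * Matrix.diagonal (fun k : Fin n =>
      if (k : ℕ) < r then Complex.exp (Complex.I * ((phases A k / 2 : ℝ) : ℂ)) else 1) * T}


/-- Negative-imaginary: sectorial with all canonical phases in `(-π, 0]`. -/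
def NegativeImaginary (A : Matrix (Fin n) (Fin n) ℂ) : Prop :=
  IsSectorial A ∧ ∀ k, phases A k ∈ Set.Ioc (-Real.pi) 0


def qf (M : Matrix (Fin n) (Fin n) ℂ) (x : Fin n → ℂ) : ℂ := star x ⬝ᵥ M *ᵥ x

lemma qf_smul (M : Matrix (Fin n) (Fin n) ℂ) (c : ℂ) (x : Fin n → ℂ) :
    qf M (c • x) = (Complex.normSq c : ℂ) * qf M x := by
  simp only [qf, star_smul, mulVec_smul, smul_dotProduct, dotProduct_smul, smul_eq_mul]
  rw [Complex.normSq_eq_conj_mul_self, Complex.star_def]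
  ring

lemma qf_add (M : Matrix (Fin n) (Fin n) ℂ) (s : ℝ) (u : ℂ) (x y : Fin n → ℂ) :
    qf M ((s : ℂ) • x + u • y) = (s : ℂ) ^ 2 * qf M x + s * (u * (star x ⬝ᵥ M *ᵥ y)
      + star u * (star y ⬝ᵥ M *ᵥ x)) + (Complex.normSq u : ℂ) * qf M y := by
  simp only [qf, star_add, star_smul, mulVec_add, mulVec_smul, smul_dotProduct, dotProduct_smul,
    smul_eq_mul, add_dotProduct, dotProduct_add]
  rw [Complex.normSq_eq_conj_mul_self]
  simp only [Complex.star_def, Complex.conj_ofReal]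
  ring

lemma exists_unit_real (w : ℂ) : ∃ u : ℂ, Complex.normSq u = 1 ∧ (u * w).im = 0 := by
  by_cases h : w = 0
  · exact ⟨1, by simp, by simp [h]⟩
  · have h' : ‖w‖ ≠ 0 := by simpa using h
    refine ⟨star w / ‖w‖, ?_, ?_⟩
    · rw [map_div₀, Complex.star_def, Complex.normSq_conj, Complex.normSq_ofReal,
        Complex.normSq_eq_norm_sq]
      field_simp
    · rw [div_mul_eq_mul_div, Complex.star_def, ← Complex.normSq_eq_conj_mul_self,
        ← Complex.ofReal_div, Complex.ofReal_im]

lemma antipodal (M : Matrix (Fin n) (Fin n) ℂ) (x y : Fin n → ℂ) (hx : x ≠ 0)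
    (h : qf M x + qf M y = 0) : ∃ z, z ≠ 0 ∧ qf M z = 0 := by
  by_cases ha : qf M x = 0
  · exact ⟨x, hx, ha⟩
  set a := qf M x with hadef
  set p := (star x ⬝ᵥ M *ᵥ y) / a with hp
  set q := (star y ⬝ᵥ M *ᵥ x) / a with hq
  obtain ⟨u, hu, hu'⟩ := exists_unit_real (p - star q)
  have him : (u * p + star u * q).im = 0 := by
    rw [← hu']
    simp [Complex.add_im, Complex.mul_im]
    ring
  set γ := (u * p + star u * q).re with hγ
  have hc : u * p + star u * q = (γ : ℂ) := Complex.ext (by simp only [hγ, Complex.ofReal_re])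
    (by rw [him, Complex.ofReal_im])
  have hc' : u * (star x ⬝ᵥ M *ᵥ y) + star u * (star y ⬝ᵥ M *ᵥ x) = γ * a := by
    rw [← hc, hp, hq]; field_simp
  have hy : qf M y = -a := by linear_combination h
  set s : ℝ := (-γ + Real.sqrt (γ ^ 2 + 4)) / 2 with hs
  have hs2 : s ^ 2 + s * γ - 1 = 0 := by
    have := Real.sq_sqrt (show 0 ≤ γ ^ 2 + 4 by positivity)
    rw [hs]; nlinarith
  refine ⟨(s : ℂ) • x + u • y, ?_, ?_⟩
  · intro h0
    have h1 : u • y = ((-s : ℝ) : ℂ) • x := by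
      rw [Complex.ofReal_neg, neg_smul]; exact eq_neg_of_add_eq_zero_right h0
    have h2 := congrArg (qf M) h1
    rw [qf_smul, qf_smul, hu, hy, Complex.normSq_ofReal, ← hadef] at h2
    have h3 : ((1 + s * s : ℝ) : ℂ) * a = 0 := by
      push_cast at h2 ⊢
      linear_combination -h2
    rcases mul_eq_zero.1 h3 with h4 | h4
    · have : (1 + s * s) = 0 := by exact_mod_cast h4
      nlinarith [mul_self_nonneg s]
    · exact ha h4
  · rw [qf_add, hc', hu, hy, ← hadef]
    have : ((s ^ 2 + s * γ - 1 : ℝ) : ℂ) = 0 := by rw [hs2]; simp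
    push_cast at this ⊢
    linear_combination a * this

lemma star_dot_self (x : Fin n → ℂ) : star x ⬝ᵥ x = ((∑ j, Complex.normSq (x j) : ℝ) : ℂ) := by
  simp only [dotProduct, Pi.star_apply, Complex.ofReal_sum, Complex.normSq_eq_conj_mul_self]
  rfl

lemma sum_normSq_pos {x : Fin n → ℂ} (hx : x ≠ 0) : 0 < ∑ j, Complex.normSq (x j) := by
  obtain ⟨i, hi⟩ := Function.ne_iff.1 hx
  exact Finset.sum_pos' (fun _ _ => Complex.normSq_nonneg _)
    ⟨i, Finset.mem_univ _, Complex.normSq_pos.2 hi⟩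

lemma exists_normalize {x : Fin n → ℂ} (hx : x ≠ 0) : ∃ c : ℝ, 0 < c ∧
    star ((c : ℂ) • x) ⬝ᵥ ((c : ℂ) • x) = 1 := by
  have h := sum_normSq_pos hx
  refine ⟨1 / Real.sqrt (∑ j, Complex.normSq (x j)), by positivity, ?_⟩
  rw [star_dot_self]
  simp only [Pi.smul_apply, smul_eq_mul, map_mul, Complex.normSq_ofReal, ← Finset.mul_sum]
  norm_cast
  have := Real.mul_self_sqrt h.le
  have h2 : Real.sqrt (∑ j, Complex.normSq (x j)) ≠ 0 := (Real.sqrt_pos.2 h).ne'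
  field_simp
  nlinarith

lemma sectorial_ne {A : Matrix (Fin n) (Fin n) ℂ} (hA : IsSectorial A) {x : Fin n → ℂ}
    (hx : x ≠ 0) : qf A x ≠ 0 := by
  obtain ⟨c, hc, h⟩ := exists_normalize hx
  have := hA _ h
  change qf A _ ≠ 0 at this
  rw [qf_smul] at this
  exact right_ne_zero_of_mul this

def numRange (A : Matrix (Fin n) (Fin n) ℂ) : Set ℂ := qf A '' {x | star x ⬝ᵥ x = 1}

lemma qf_sub_scalar (A : Matrix (Fin n) (Fin n) ℂ) (c : ℂ) (x : Fin n → ℂ) :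
    qf (A - c • (1 : Matrix (Fin n) (Fin n) ℂ)) x = qf A x - c * (star x ⬝ᵥ x) := by
  simp [qf, sub_mulVec, smul_mulVec, dotProduct_sub]

lemma convex_numRange (A : Matrix (Fin n) (Fin n) ℂ) : Convex ℝ (numRange A) := by
  rintro _ ⟨x, hx, rfl⟩ _ ⟨y, hy, rfl⟩ s t hs ht hst
  have hx0 : x ≠ 0 := by rintro rfl; simp at hx
  have hy0 : y ≠ 0 := by rintro rfl; simp at hy
  rcases hs.eq_or_lt with rfl | hs'
  · have : t = 1 := by linarith
    subst this
    exact ⟨y, hy, by simp⟩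
  set c : ℂ := s • qf A x + t • qf A y with hc
  have hstc : (s : ℂ) + t = 1 := by exact_mod_cast hst
  have hxs : star x ⬝ᵥ x = 1 := hx
  have hys : star y ⬝ᵥ y = 1 := hy
  obtain ⟨z, hz, hz'⟩ := antipodal (A - c • (1 : Matrix (Fin n) (Fin n) ℂ))
    (((Real.sqrt s : ℝ) : ℂ) • x) (((Real.sqrt t : ℝ) : ℂ) • y)
    (smul_ne_zero (by simpa using (Real.sqrt_pos.2 hs').ne') hx0) (by
      rw [qf_smul, qf_smul, Complex.normSq_ofReal, Complex.normSq_ofReal,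
        Real.mul_self_sqrt hs, Real.mul_self_sqrt ht, qf_sub_scalar, qf_sub_scalar, hxs, hys]
      have hc' : c = s * qf A x + t * qf A y := by rw [hc]; simp
      linear_combination -c * hstc - hc')
  obtain ⟨d, hd, h⟩ := exists_normalize hz
  refine ⟨(d : ℂ) • z, h, ?_⟩
  have h3 := qf_smul (A - c • (1 : Matrix (Fin n) (Fin n) ℂ)) (d : ℂ) z
  rw [hz', mul_zero, qf_sub_scalar, h, mul_one, sub_eq_zero] at h3
  exact h3

lemma continuous_qf (A : Matrix (Fin n) (Fin n) ℂ) : Continuous (qf A) := by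
  unfold qf
  fun_prop

lemma isCompact_numRange (A : Matrix (Fin n) (Fin n) ℂ) : IsCompact (numRange A) := by
  refine IsCompact.image ?_ (continuous_qf A)
  refine Metric.isCompact_of_isClosed_isBounded ?_ ?_
  · exact isClosed_eq (by fun_prop) continuous_const
  · refine (Metric.isBounded_closedBall (x := (0 : Fin n → ℂ)) (r := 1)).subset ?_
    intro x hx
    have hx : star x ⬝ᵥ x = 1 := hx
    rw [star_dot_self] at hx
    have hx : ∑ j, Complex.normSq (x j) = 1 := by exact_mod_cast hx
    rw [mem_closedBall_zero_iff, pi_norm_le_iff_of_nonneg zero_le_one]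
    intro i
    have := Finset.single_le_sum (f := fun j => Complex.normSq (x j))
      (fun j _ => Complex.normSq_nonneg _) (Finset.mem_univ i)
    rw [hx] at this
    simp only [Complex.normSq_eq_norm_sq] at this
    exact (sq_le_one_iff₀ (norm_nonneg _)).1 this

lemma exists_rotation {A : Matrix (Fin n) (Fin n) ℂ} (hA : IsSectorial A) :
    ∃ θ : ℝ, ∀ x, x ≠ 0 → 0 < (Complex.exp (-(Complex.I * θ)) * qf A x).re := by
  obtain ⟨f, u, hu, hf⟩ := geometric_hahn_banach_point_closed (convex_numRange A)
    (isCompact_numRange A).isClosed (x := (0 : ℂ)) (by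
      rintro ⟨x, hx, h⟩
      exact hA x hx h)
  rw [map_zero] at hu
  set w : ℂ := ⟨f 1, f Complex.I⟩ with hw
  have hfw : ∀ z : ℂ, f z = (star w * z).re := by
    intro z
    have : z = z.re • (1 : ℂ) + z.im • Complex.I := by
      apply Complex.ext <;> simp
    conv_lhs => rw [this, map_add, map_smul, map_smul]
    simp [hw, Complex.mul_re]; ring
  have hpol : star w = ‖w‖ * Complex.exp (-(Complex.I * w.arg)) := by
    conv_lhs => rw [← Complex.norm_mul_exp_arg_mul_I w]
    rw [Complex.star_def, map_mul, Complex.conj_ofReal, ← Complex.exp_conj, map_mul,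
      Complex.conj_I, Complex.conj_ofReal]
    congr 2; ring
  refine ⟨w.arg, fun x hx => ?_⟩
  obtain ⟨d, hd, h⟩ := exists_normalize hx
  have h1 := hf _ ⟨_, h, rfl⟩
  rw [hfw, qf_smul, hpol, Complex.normSq_ofReal] at h1
  have h2 : (‖w‖ * Complex.exp (-(Complex.I * w.arg)) * (((d * d : ℝ) : ℂ) * qf A x)) =
    ((‖w‖ * (d * d) : ℝ) : ℂ) * (Complex.exp (-(Complex.I * w.arg)) * qf A x) := by
    push_cast; ring
  rw [h2, Complex.re_ofReal_mul] at h1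
  exact pos_of_mul_pos_right (hu.trans h1) (by positivity)

lemma qf_congr (M T : Matrix (Fin n) (Fin n) ℂ) (x : Fin n → ℂ) :
    qf (Tᴴ * M * T) x = qf M (T *ᵥ x) := by
  simp only [qf, star_mulVec, dotProduct_mulVec, vecMul_vecMul]

lemma qf_phaseDiag (φ : Fin n → ℝ) (y : Fin n → ℂ) :
    qf (phaseDiag φ) y = ∑ j, (Complex.normSq (y j) : ℂ) * Complex.exp (Complex.I * φ j) := by
  simp only [qf, phaseDiag, dotProduct, mulVec_diagonal, Pi.star_apply]
  refine Finset.sum_congr rfl fun j _ => ?_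
  rw [Complex.normSq_eq_conj_mul_self, Complex.star_def]
  ring

lemma rot_qf {A T : Matrix (Fin n) (Fin n) ℂ} {φ : Fin n → ℝ} (h : IsSectorialDecomp A T φ)
    (α : ℝ) (x : Fin n → ℂ) : Complex.exp (-(Complex.I * α)) * qf A x =
      ∑ j, (Complex.normSq ((T *ᵥ x) j) : ℂ) * Complex.exp (((φ j - α : ℝ) : ℂ) * Complex.I) := by
  rw [h.2, qf_congr, qf_phaseDiag, Finset.mul_sum]
  refine Finset.sum_congr rfl fun j _ => ?_
  rw [mul_left_comm, ← Complex.exp_add]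
  congr 2
  push_cast; ring

lemma im_qf {A T : Matrix (Fin n) (Fin n) ℂ} {φ : Fin n → ℝ} (h : IsSectorialDecomp A T φ)
    (α : ℝ) (x : Fin n → ℂ) : (Complex.exp (-(Complex.I * α)) * qf A x).im =
      ∑ j, Complex.normSq ((T *ᵥ x) j) * Real.sin (φ j - α) := by
  rw [rot_qf h, Complex.im_sum]
  refine Finset.sum_congr rfl fun j _ => ?_
  rw [Complex.im_ofReal_mul, Complex.exp_ofReal_mul_I_im]

lemma re_qf {A T : Matrix (Fin n) (Fin n) ℂ} {φ : Fin n → ℝ} (h : IsSectorialDecomp A T φ)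
    (α : ℝ) (x : Fin n → ℂ) : (Complex.exp (-(Complex.I * α)) * qf A x).re =
      ∑ j, Complex.normSq ((T *ᵥ x) j) * Real.cos (φ j - α) := by
  rw [rot_qf h, Complex.re_sum]
  refine Finset.sum_congr rfl fun j _ => ?_
  rw [Complex.re_ofReal_mul, Complex.exp_ofReal_mul_I_re]

lemma mulVec_ne {P : Matrix (Fin n) (Fin n) ℂ} (hP : IsUnit P) {v : Fin n → ℂ} (hv : v ≠ 0) :
    P *ᵥ v ≠ 0 := by
  intro h
  apply hv
  have := congrArg (P⁻¹ *ᵥ ·) h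
  simpa [mulVec_mulVec, Matrix.nonsing_inv_mul P ((Matrix.isUnit_iff_isUnit_det P).1 hP)]
    using this

lemma exists_vec (S I J : Finset (Fin n)) (M N : Matrix (Fin n) (Fin n) ℂ)
    (h : S.card + (I.card + J.card) < n) : ∃ v : Fin n → ℂ, v ≠ 0 ∧ (∀ j ∈ S, v j = 0) ∧
      (∀ j ∈ I, (M *ᵥ v) j = 0) ∧ (∀ j ∈ J, (N *ᵥ v) j = 0) := by
  let L : (Fin n → ℂ) →ₗ[ℂ] (S → ℂ) × ((I → ℂ) × (J → ℂ)) :=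
    (LinearMap.funLeft ℂ ℂ ((↑) : S → Fin n)).prod
      (((LinearMap.funLeft ℂ ℂ ((↑) : I → Fin n)).comp M.mulVecLin).prod
      ((LinearMap.funLeft ℂ ℂ ((↑) : J → Fin n)).comp N.mulVecLin))
  have hL : LinearMap.ker L ≠ ⊥ := LinearMap.ker_ne_bot_of_finrank_lt (by
    simpa using h)
  obtain ⟨v, hv, hv0⟩ := (Submodule.ne_bot_iff _).1 hL
  have hv' : L v = 0 := hv
  have h1 := congrArg Prod.fst hv'
  have h2 := congrArg (fun p => p.2.1) hv'
  have h3 := congrArg (fun p => p.2.2) hv'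
  exact ⟨v, hv0, fun j hj => congrFun h1 ⟨j, hj⟩, fun j hj => congrFun h2 ⟨j, hj⟩,
    fun j hj => congrFun h3 ⟨j, hj⟩⟩

lemma key {A B TA TB P Q : Matrix (Fin n) (Fin n) ℂ} {φ ψ : Fin n → ℝ}
    (hA : IsSectorialDecomp A TA φ) (hB : IsSectorialDecomp B TB ψ)
    (hφ : Antitone φ) (hψ : Antitone ψ) (a : ℝ)
    (ha : ∀ i, φ i ∈ Set.Ioc a (a + Real.pi)) (hb : ∀ i, ψ i ∈ Set.Ioc a (a + Real.pi))
    (hP : IsUnit P) (hQ : IsUnit Q) (S : Finset (Fin n)) (r : ℕ) (hS : S.card ≤ r)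
    (hag : ∀ v, (∀ j ∈ S, v j = 0) → qf A (P *ᵥ v) = qf B (Q *ᵥ v))
    (k k' : Fin n) (hk : (k' : ℕ) = k + r) : ψ k' ≤ φ k := by
  by_contra! hlt
  obtain ⟨v, hv0, hvS, hvI, hvJ⟩ := exists_vec S (Finset.Iio k) (Finset.Ioi k') (TA * P) (TB * Q)
    (by rw [Fin.card_Iio, Fin.card_Ioi]; have := k'.2; omega)
  have hx := mulVec_ne hA.1 (mulVec_ne hP hv0)
  have hy := mulVec_ne hB.1 (mulVec_ne hQ hv0)
  set α := (φ k + ψ k') / 2 with hα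
  have e1 := im_qf hA α (P *ᵥ v)
  have e2 := im_qf hB α (Q *ᵥ v)
  rw [hag v hvS, e2] at e1
  rw [mulVec_mulVec] at hx hy
  simp only [mulVec_mulVec] at e1
  have hneg : ∑ j, Complex.normSq (((TA * P) *ᵥ v) j) * Real.sin (φ j - α) < 0 := by
    obtain ⟨i, hi⟩ := Function.ne_iff.1 hx
    have hs : ∀ j, k ≤ j → Real.sin (φ j - α) < 0 := fun j hj => by
      apply Real.sin_neg_of_neg_of_neg_pi_lt
      · have := hφ hj; linarith
      · have := (ha j).1; have := (hb k').2; linarith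
    refine Finset.sum_neg' (fun j _ => ?_) ⟨i, Finset.mem_univ _, ?_⟩
    · by_cases hj : j < k
      · rw [hvI j (by simpa using hj)]; simp
      · exact mul_nonpos_of_nonneg_of_nonpos (Complex.normSq_nonneg _) (hs j (not_lt.1 hj)).le
    · have : k ≤ i := by
        by_contra! hj
        exact hi (hvI i (by simpa using hj))
      exact mul_neg_of_pos_of_neg (Complex.normSq_pos.2 hi) (hs i this)
  have hpos : 0 < ∑ j, Complex.normSq (((TB * Q) *ᵥ v) j) * Real.sin (ψ j - α) := by
    obtain ⟨i, hi⟩ := Function.ne_iff.1 hy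
    have hs : ∀ j, j ≤ k' → 0 < Real.sin (ψ j - α) := fun j hj => by
      apply Real.sin_pos_of_pos_of_lt_pi
      · have := hψ hj; linarith
      · have := (hb j).2; have := (ha k).1; linarith
    refine Finset.sum_pos' (fun j _ => ?_) ⟨i, Finset.mem_univ _, ?_⟩
    · by_cases hj : k' < j
      · rw [hvJ j (by simpa using hj)]; simp
      · exact mul_nonneg (Complex.normSq_nonneg _) (hs j (not_lt.1 hj)).le
    · have : i ≤ k' := by
        by_contra! hj
        exact hi (hvJ i (by simpa using hj))
      exact mul_pos (Complex.normSq_pos.2 hi) (hs i this)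
  linarith

lemma phaseDiag_shift (φ : Fin n → ℝ) (m : ℤ) :
    phaseDiag (fun i => φ i - m • (2 * Real.pi)) = phaseDiag φ := by
  unfold phaseDiag
  congr 1
  ext i
  rw [Complex.exp_eq_exp_iff_exists_int]
  refine ⟨-m, ?_⟩
  push_cast
  simp only [zsmul_eq_mul]
  ring

lemma decomp_shift {A T : Matrix (Fin n) (Fin n) ℂ} {φ : Fin n → ℝ}
    (h : IsSectorialDecomp A T φ) (m : ℤ) :
    IsSectorialDecomp A T (fun i => φ i - m • (2 * Real.pi)) :=
  ⟨h.1, by rw [phaseDiag_shift]; exact h.2⟩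

lemma decomp_perm {A T : Matrix (Fin n) (Fin n) ℂ} {φ : Fin n → ℝ}
    (h : IsSectorialDecomp A T φ) (σ : Equiv.Perm (Fin n)) :
    IsSectorialDecomp A (T.submatrix σ id) (φ ∘ σ) := by
  refine ⟨?_, ?_⟩
  · exact (Matrix.isUnit_submatrix_equiv (e₁ := σ) (e₂ := Equiv.refl _)).2 h.1
  · have : phaseDiag (φ ∘ σ) = (phaseDiag φ).submatrix σ σ := by
      ext i j; simp [phaseDiag, Matrix.diagonal_apply]
    rw [this, conjTranspose_submatrix, submatrix_mul_equiv, submatrix_mul_equiv, submatrix_id_id]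
    exact h.2

lemma iSup_anti (hn : 1 ≤ n) {φ : Fin n → ℝ} (h : Antitone φ) :
    (⨆ i, φ i) = φ ⟨0, hn⟩ := by
  have : Nonempty (Fin n) := ⟨⟨0, hn⟩⟩
  refine le_antisymm (ciSup_le fun i => h (Fin.mk_le_of_le_val (Nat.zero_le _))) ?_
  exact le_ciSup (Set.finite_range φ).bddAbove _

lemma iInf_anti (hn : 1 ≤ n) {φ : Fin n → ℝ} (h : Antitone φ) :
    (⨅ i, φ i) = φ ⟨n - 1, by omega⟩ := by
  have : Nonempty (Fin n) := ⟨⟨0, hn⟩⟩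
  refine le_antisymm (ciInf_le (Set.finite_range φ).bddBelow _) ?_
  exact le_ciInf fun i => h (by rw [Fin.le_def]; have := i.2; simp; omega)

lemma exists_sort (φ : Fin n → ℝ) : ∃ σ : Equiv.Perm (Fin n), Antitone (φ ∘ σ) := by
  refine ⟨Tuple.sort (fun i => - φ i), fun i j hij => ?_⟩
  have := Tuple.monotone_sort (fun i => - φ i) hij
  simpa using this

lemma phases_unique_aux {A T T' : Matrix (Fin n) (Fin n) ℂ} {φ ψ : Fin n → ℝ}
    (hA : IsSectorialDecomp A T φ) (hB : IsSectorialDecomp A T' ψ)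
    (hφ : Antitone φ) (hψ : Antitone ψ) (a : ℝ)
    (ha : ∀ i, φ i ∈ Set.Ioc a (a + Real.pi)) (hb : ∀ i, ψ i ∈ Set.Ioc a (a + Real.pi)) :
    φ = ψ := by
  ext k
  apply le_antisymm
  · exact key (P := 1) (Q := 1) hB hA hψ hφ a hb ha isUnit_one isUnit_one ∅ 0 (by simp)
      (fun _ _ => rfl) k k rfl
  · exact key (P := 1) (Q := 1) hA hB hφ hψ a ha hb isUnit_one isUnit_one ∅ 0 (by simp)
      (fun _ _ => rfl) k k rfl

lemma cos_pos_shift {x : ℝ} (h : 0 < Real.cos x) :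
    ∃ m : ℤ, x - m • (2 * Real.pi) ∈ Set.Ioo (-(Real.pi / 2)) (Real.pi / 2) := by
  obtain ⟨m, hm, -⟩ := existsUnique_sub_zsmul_mem_Ioc Real.two_pi_pos x (-Real.pi)
  refine ⟨m, ?_⟩
  have hc : Real.cos (x - m • (2 * Real.pi)) = Real.cos x := by
    rw [zsmul_eq_mul]; exact Real.cos_sub_int_mul_two_pi x m
  rw [← hc] at h
  set y := x - m • (2 * Real.pi)
  obtain ⟨h1, h2⟩ := hm
  constructor
  · by_contra! h3
    have := Real.cos_nonpos_of_pi_div_two_le_of_le (x := -y) (by linarith) (by linarith)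
    rw [Real.cos_neg] at this
    linarith
  · by_contra! h3
    have := Real.cos_nonpos_of_pi_div_two_le_of_le h3 (by linarith)
    linarith

lemma canonical_unique (hn : 1 ≤ n) {A : Matrix (Fin n) (Fin n) ℂ} {φ ψ : Fin n → ℝ}
    (h1 : IsCanonicalPhases A φ) (h2 : IsCanonicalPhases A ψ) : φ = ψ := by
  obtain ⟨a1, s1, l1, u1, T, d1⟩ := h1
  obtain ⟨a2, s2, l2, u2, T', d2⟩ := h2
  rw [iSup_anti hn a1, iInf_anti hn a1] at l1 u1
  rw [iSup_anti hn a2, iInf_anti hn a2] at l2 u2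
  set z : Fin n := ⟨0, hn⟩
  set e : Fin n := ⟨n - 1, by omega⟩
  have hz : ∀ i, z ≤ i := fun i => Fin.mk_le_of_le_val (Nat.zero_le _)
  have he : ∀ i, i ≤ e := fun i => by rw [Fin.le_def]; have := i.2; simp [e]; omega
  set θ := (ψ z + ψ e) / 2 with hθ
  have hψθ : ∀ i, ψ i - θ ∈ Set.Ioo (-(Real.pi / 2)) (Real.pi / 2) := fun i => by
    have := a2 (hz i); have := a2 (he i); have := s2 z e
    constructor <;> linarith
  have hm : ∀ i, ∃ m : ℤ, φ i - θ - m • (2 * Real.pi) ∈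
      Set.Ioo (-(Real.pi / 2)) (Real.pi / 2) := by
    intro i
    apply cos_pos_shift
    have hT := (Matrix.isUnit_iff_isUnit_det T).1 d1.1
    set x := T⁻¹ *ᵥ (Pi.single i 1 : Fin n → ℂ) with hx
    have hTx : T *ᵥ x = Pi.single i 1 := by
      rw [hx, mulVec_mulVec, Matrix.mul_nonsing_inv T hT, one_mulVec]
    have hx0 : x ≠ 0 := by
      rintro h0
      rw [h0, mulVec_zero] at hTx
      have := congrFun hTx i
      simp at this
    have r1 := re_qf d1 θ x
    rw [re_qf d2 θ x, hTx] at r1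
    have r2 : ∑ j, Complex.normSq ((Pi.single i 1 : Fin n → ℂ) j) * Real.cos (φ j - θ) =
        Real.cos (φ i - θ) := by
      rw [Finset.sum_eq_single i]
      · simp
      · intro j _ hj
        simp [Pi.single_eq_of_ne hj]
      · simp
    rw [← r2, ← r1]
    obtain ⟨j, hj⟩ := Function.ne_iff.1 (mulVec_ne d2.1 hx0)
    have hc : ∀ j, 0 < Real.cos (ψ j - θ) := fun j => Real.cos_pos_of_mem_Ioo (hψθ j)
    exact Finset.sum_pos' (fun j _ => mul_nonneg (Complex.normSq_nonneg _) (hc j).le)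
      ⟨j, Finset.mem_univ _, mul_pos (Complex.normSq_pos.2 hj) (hc j)⟩
  choose m hm using hm
  have hmc : ∀ i, m i = m z := by
    intro i
    have b1 := hm i
    have b2 := hm z
    have b3 := s1 i z
    have b4 := s1 z i
    simp only [zsmul_eq_mul, Set.mem_Ioo] at b1 b2
    have hp := Real.pi_pos
    have c1 : (m i : ℝ) - m z < 1 := by
      by_contra! hh
      nlinarith
    have c2 : (m z : ℝ) - m i < 1 := by
      by_contra! hh
      nlinarith
    have c1' : m i - m z < 1 := by exact_mod_cast c1
    have c2' : m z - m i < 1 := by exact_mod_cast c2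
    omega
  have hfin := phases_unique_aux (decomp_shift d1 (m z)) d2 (fun i j hij => by
      have := a1 hij; exact sub_le_sub_right this _) a2 (θ - Real.pi / 2) (fun i => by
      have := hm i
      rw [hmc i] at this
      constructor <;> linarith [this.1, this.2]) (fun i => by
      have := hψθ i
      constructor <;> linarith [this.1, this.2])
  have f1 := congrFun hfin z
  have f2 := congrFun hfin e
  simp only [zsmul_eq_mul] at f1 f2
  have hp := Real.pi_pos
  have c1 : (m z : ℝ) < 1 := by
    by_contra! hh
    nlinarith
  have c2 : -1 < (m z : ℝ) := by
    by_contra! hh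
    nlinarith
  have hm0 : m z = 0 := by
    have c1' : m z < 1 := by exact_mod_cast c1
    have c2' : -1 < m z := by exact_mod_cast c2
    omega
  rw [hm0] at hfin
  simpa using hfin

open scoped MatrixOrder in
lemma posDef_factor {H : Matrix (Fin n) (Fin n) ℂ} (hH : H.PosDef) :
    ∃ S : Matrix (Fin n) (Fin n) ℂ, IsUnit S ∧ H = Sᴴ * S := by
  obtain ⟨S, hS⟩ := CStarAlgebra.nonneg_iff_eq_star_mul_self.mp hH.posSemidef.nonneg
  refine ⟨S, ?_, hS⟩
  have := hH.isUnit
  rw [hS, Matrix.isUnit_iff_isUnit_det, det_mul] at this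
  exact (Matrix.isUnit_iff_isUnit_det S).2 (isUnit_of_mul_isUnit_right this)

lemma exists_decomp {A : Matrix (Fin n) (Fin n) ℂ} (hA : IsSectorial A) :
    ∃ T φ, ∃ θ : ℝ, IsSectorialDecomp A T φ ∧ ∀ i, |φ i - θ| < Real.pi / 2 := by
  obtain ⟨θ, hθ⟩ := exists_rotation hA
  set C := Complex.exp (-(Complex.I * θ)) • A with hC
  set H : Matrix (Fin n) (Fin n) ℂ := (1 / 2 : ℂ) • (C + Cᴴ) with hH
  set K : Matrix (Fin n) (Fin n) ℂ := (-Complex.I / 2 : ℂ) • (C - Cᴴ) with hK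
  have hCHK : C = H + Complex.I • K := by
    ext i j
    simp only [hH, hK, Matrix.add_apply, Matrix.smul_apply, Matrix.sub_apply, smul_eq_mul]
    linear_combination (1 / 2 * (C i j - Cᴴ i j)) * Complex.I_sq
  have hHh : H.IsHermitian := by
    rw [Matrix.IsHermitian, hH, conjTranspose_smul, conjTranspose_add, conjTranspose_conjTranspose,
      add_comm]
    simp
  have hKh : K.IsHermitian := by
    rw [Matrix.IsHermitian, hK, conjTranspose_smul, conjTranspose_sub, conjTranspose_conjTranspose,
      ← neg_sub C, smul_neg, ← neg_smul]
    congr 1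
    simp
    ring
  have hHp : H.PosDef := by
    refine Matrix.PosDef.of_dotProduct_mulVec_pos hHh fun {x} hx => ?_
    have h1 : star x ⬝ᵥ H *ᵥ x = (((qf C x).re : ℝ) : ℂ) := by
      have h2 : star x ⬝ᵥ Cᴴ *ᵥ x = star (qf C x) := by
        rw [qf, star_dotProduct, star_mulVec, dotProduct_mulVec, conjTranspose_conjTranspose]
      rw [hH, smul_mulVec, add_mulVec, dotProduct_smul, dotProduct_add, h2, Complex.re_eq_add_conj]
      simp [qf]
      ring
    rw [h1]
    have h3 : qf C x = Complex.exp (-(Complex.I * θ)) * qf A x := by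
      simp [qf, hC, smul_mulVec]
    rw [h3]
    exact_mod_cast hθ x hx
  obtain ⟨S, hS, hHS⟩ := posDef_factor hHp
  have hSd := (Matrix.isUnit_iff_isUnit_det S).1 hS
  have hSS : S⁻¹ * S = 1 := Matrix.nonsing_inv_mul S hSd
  have hSS' : Sᴴ * (S⁻¹)ᴴ = 1 := by rw [← conjTranspose_mul, hSS, conjTranspose_one]
  have hK' : ((S⁻¹)ᴴ * K * S⁻¹).IsHermitian := isHermitian_conjTranspose_mul_mul _ hKh
  set lam := hK'.eigenvalues with hlam
  set U : Matrix (Fin n) (Fin n) ℂ := (hK'.eigenvectorUnitary : Matrix (Fin n) (Fin n) ℂ) with hU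
  have hUU : U * Uᴴ = 1 := Unitary.mul_star_self_of_mem hK'.eigenvectorUnitary.2
  have hUU' : Uᴴ * U = 1 := Unitary.star_mul_self_of_mem hK'.eigenvectorUnitary.2
  have hspec : (S⁻¹)ᴴ * K * S⁻¹ = U * Matrix.diagonal (fun i => (lam i : ℂ)) * Uᴴ := by
    conv_lhs => rw [hK'.spectral_theorem]
    rw [Unitary.conjStarAlgAut_apply]
    rfl
  have hKe : K = Sᴴ * (U * Matrix.diagonal (fun i => (lam i : ℂ)) * Uᴴ) * S := by
    rw [← hspec]
    calc K = (Sᴴ * (S⁻¹)ᴴ) * K * (S⁻¹ * S) := by rw [hSS, hSS']; simp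
      _ = _ := by simp only [Matrix.mul_assoc]
  set μ : Fin n → ℂ := fun i => 1 + Complex.I * lam i with hμ
  have hCe : C = Sᴴ * (U * Matrix.diagonal μ * Uᴴ) * S := by
    have : Matrix.diagonal μ = 1 + Complex.I • Matrix.diagonal (fun i => (lam i : ℂ)) := by
      rw [← diagonal_one, ← diagonal_smul, diagonal_add]
      rfl
    rw [this, hCHK, hHS]
    conv_lhs => rw [hKe]
    rw [Matrix.mul_add, Matrix.add_mul, Matrix.mul_add, Matrix.add_mul, Matrix.mul_one, hUU,
      Matrix.mul_one]
    simp only [Matrix.mul_smul, Matrix.smul_mul]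
  have hμre : ∀ i, 0 < (μ i).re := fun i => by simp [hμ]
  have hμ0 : ∀ i, μ i ≠ 0 := fun i h => by have := hμre i; rw [h] at this; simp at this
  have hρ : ∀ i, 0 < ‖μ i‖ := fun i => norm_pos_iff.2 (hμ0 i)
  set W : Matrix (Fin n) (Fin n) ℂ := Matrix.diagonal (fun i => ((Real.sqrt ‖μ i‖ : ℝ) : ℂ)) with hW
  refine ⟨W * Uᴴ * S, fun i => θ + (μ i).arg, θ, ⟨?_, ?_⟩, ?_⟩
  · refine (IsUnit.mul ?_ ?_).mul hS
    · rw [Matrix.isUnit_iff_isUnit_det, hW, det_diagonal, isUnit_iff_ne_zero,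
        Finset.prod_ne_zero_iff]
      intro i _
      have := (Real.sqrt_pos.2 (hρ i)).ne'
      exact_mod_cast this
    · exact isUnit_iff_exists.2 ⟨U, hUU', hUU⟩
  · have hWd : Wᴴ * phaseDiag (fun i => θ + (μ i).arg) * W =
        Complex.exp (Complex.I * θ) • Matrix.diagonal μ := by
      rw [hW, diagonal_conjTranspose, phaseDiag, diagonal_mul_diagonal, diagonal_mul_diagonal,
        ← diagonal_smul]
      congr 1
      ext i
      simp only [Pi.star_apply, Complex.star_def, Complex.conj_ofReal, Pi.smul_apply, smul_eq_mul]
      have e1 : ((Real.sqrt ‖μ i‖ : ℝ) : ℂ) * ((Real.sqrt ‖μ i‖ : ℝ) : ℂ) = (‖μ i‖ : ℂ) := by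
        rw [← Complex.ofReal_mul, Real.mul_self_sqrt (hρ i).le]
      conv_rhs => rw [← Complex.norm_mul_exp_arg_mul_I (μ i)]
      rw [← e1]
      push_cast
      rw [mul_add, Complex.exp_add, mul_comm Complex.I ((μ i).arg : ℂ)]
      ring
    have hAC : A = Complex.exp (Complex.I * θ) • C := by
      rw [hC, smul_smul, ← Complex.exp_add]
      simp
    calc A = Sᴴ * U * (Complex.exp (Complex.I * θ) • Matrix.diagonal μ) * Uᴴ * S := by
          conv_lhs => rw [hAC, hCe]
          simp only [Matrix.mul_smul, Matrix.smul_mul, Matrix.mul_assoc]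
      _ = _ := by
          rw [← hWd]
          simp only [conjTranspose_mul, conjTranspose_conjTranspose, Matrix.mul_assoc]
  · intro i
    rw [add_sub_cancel_left, Complex.abs_arg_lt_pi_div_two_iff]
    exact Or.inl (hμre i)

lemma exists_canonical (hn : 1 ≤ n) {A : Matrix (Fin n) (Fin n) ℂ} (hA : IsSectorial A) :
    ∃ φ, IsCanonicalPhases A φ := by
  obtain ⟨T, φ, θ, hd, hθ⟩ := exists_decomp hA
  obtain ⟨σ, hσ⟩ := exists_sort φ
  obtain ⟨m, hm, -⟩ := existsUnique_sub_zsmul_mem_Ioc Real.two_pi_pos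
    (((φ ∘ σ) ⟨0, hn⟩ + (φ ∘ σ) ⟨n - 1, by omega⟩) / 2) (-Real.pi)
  have ha : Antitone (fun i => (φ ∘ σ) i - m • (2 * Real.pi)) :=
    fun i j hij => sub_le_sub_right (hσ hij) _
  refine ⟨fun i => (φ ∘ σ) i - m • (2 * Real.pi), ha, ?_, ?_, ?_, _,
    decomp_shift (decomp_perm hd σ) m⟩
  · intro i j
    have h1 := abs_lt.1 (hθ (σ i))
    have h2 := abs_lt.1 (hθ (σ j))
    simp only [Function.comp]
    linarith [h1.1, h1.2, h2.1, h2.2]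
  · rw [iSup_anti hn ha, iInf_anti hn ha]
    linarith [hm.1]
  · rw [iSup_anti hn ha, iInf_anti hn ha]
    linarith [hm.2]

lemma phases_spec (hn : 1 ≤ n) {A : Matrix (Fin n) (Fin n) ℂ} (hA : IsSectorial A) :
    IsCanonicalPhases A (phases A) := by
  have h := exists_canonical hn hA
  rw [phases, dif_pos h]
  exact h.choose_spec

lemma phases_eq (hn : 1 ≤ n) {A : Matrix (Fin n) (Fin n) ℂ} {φ : Fin n → ℝ}
    (h : IsCanonicalPhases A φ) : phases A = φ := by
  have h' : ∃ φ, IsCanonicalPhases A φ := ⟨φ, h⟩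
  rw [phases, dif_pos h']
  exact canonical_unique hn h'.choose_spec h

lemma sectorial_of_decomp {A T : Matrix (Fin n) (Fin n) ℂ} {φ : Fin n → ℝ}
    (h : IsSectorialDecomp A T φ) (a : ℝ) (ha : ∀ i, φ i ∈ Set.Ioo a (a + Real.pi)) :
    IsSectorial A := by
  intro x hx h0
  have hx0 : x ≠ 0 := by rintro rfl; simp at hx
  have h1 := im_qf h a x
  change qf A x = 0 at h0
  rw [h0] at h1
  obtain ⟨j, hj⟩ := Function.ne_iff.1 (mulVec_ne h.1 hx0)
  have hc : ∀ j, 0 < Real.sin (φ j - a) := fun j =>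
    Real.sin_pos_of_pos_of_lt_pi (by linarith [(ha j).1]) (by linarith [(ha j).2])
  have := Finset.sum_pos' (fun j _ => mul_nonneg (Complex.normSq_nonneg ((T *ᵥ x) j)) (hc j).le)
      ⟨j, Finset.mem_univ _, mul_pos (Complex.normSq_pos.2 hj) (hc j)⟩
  simp at h1
  linarith

/-- A decomposition with all angles in `(-π, π)` and spread `< π` gives the canonical phases. -/
lemma phases_of_decomp (hn : 1 ≤ n) {A T : Matrix (Fin n) (Fin n) ℂ} {φ : Fin n → ℝ}
    (h : IsSectorialDecomp A T φ) (h1 : ∀ i j, φ i - φ j < Real.pi)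
    (h2 : ∀ i, φ i ∈ Set.Ioo (-Real.pi) Real.pi) :
    IsSectorial A ∧ ∃ σ : Equiv.Perm (Fin n), Antitone (φ ∘ σ) ∧ phases A = φ ∘ σ := by
  obtain ⟨σ, hσ⟩ := exists_sort φ
  constructor
  · set z := σ ⟨0, hn⟩
    set e := σ ⟨n - 1, by omega⟩
    have hz : ∀ i, φ i ≤ φ z := fun i => by
      have := hσ (show (⟨0, hn⟩ : Fin n) ≤ σ.symm i from Fin.mk_le_of_le_val (Nat.zero_le _))
      simpa using this
    have he : ∀ i, φ e ≤ φ i := fun i => by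
      have := hσ (show σ.symm i ≤ (⟨n - 1, by omega⟩ : Fin n) by
        rw [Fin.le_def]; have := (σ.symm i).2; simp only; omega)
      simpa using this
    refine sectorial_of_decomp h ((φ z + φ e - Real.pi) / 2) fun i => ?_
    have := hz i; have := he i; have := h1 z e
    constructor <;> linarith
  · refine ⟨σ, hσ, phases_eq hn ⟨hσ, fun i j => h1 _ _, ?_, ?_, _, decomp_perm h σ⟩⟩
    · rw [iSup_anti hn hσ, iInf_anti hn hσ]
      have := (h2 (σ ⟨0, hn⟩)).1; have := (h2 (σ ⟨n - 1, by omega⟩)).1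
      simp only [Function.comp]
      linarith
    · rw [iSup_anti hn hσ, iInf_anti hn hσ]
      have := (h2 (σ ⟨0, hn⟩)).2; have := (h2 (σ ⟨n - 1, by omega⟩)).2
      simp only [Function.comp]
      linarith

lemma gauge_mono {Φ : (Fin n → ℝ) → ℝ} (hΦ : IsSymmetricGauge Φ) {x y : Fin n → ℝ}
    (h : ∀ k, |x k| ≤ |y k|) : Φ x ≤ Φ y := by
  have hconv : ConvexOn ℝ Set.univ Φ := by
    refine ⟨convex_univ, fun u _ v _ a b ha hb _ => (hΦ.subadd _ _).trans ?_⟩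
    rw [hΦ.smul, hΦ.smul, abs_of_nonneg ha, abs_of_nonneg hb]
    rfl
  have hmem : x ∈ convexHull ℝ (Set.univ.pi fun k => ({-|y k|, |y k|} : Set ℝ)) := by
    apply mem_convexHull_pi
    intro k _
    rw [convexHull_pair, segment_eq_Icc (by linarith [abs_nonneg (y k)])]
    exact abs_le.1 (h k)
  obtain ⟨z, hz, hle⟩ := hconv.exists_ge_of_mem_convexHull (Set.subset_univ _) hmem
  refine hle.trans_eq ?_
  rw [← hΦ.abs z, ← hΦ.abs y]
  congr 1
  ext k
  rcases hz k (Set.mem_univ _) with h1 | h1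
  · rw [h1]; simp
  · rw [Set.mem_singleton_iff.1 h1]; simp

lemma phaseDiag_mul (φ ψ : Fin n → ℝ) : phaseDiag φ * phaseDiag ψ = phaseDiag (φ + ψ) := by
  rw [phaseDiag, phaseDiag, phaseDiag, diagonal_mul_diagonal]
  congr 1
  ext i
  rw [← Complex.exp_add, Pi.add_apply]
  congr 1
  push_cast; ring

lemma phaseDiag_zero : phaseDiag (0 : Fin n → ℝ) = 1 := by
  simp [phaseDiag]

lemma phaseDiag_conj (φ : Fin n → ℝ) : (phaseDiag φ)ᴴ = phaseDiag (-φ) := by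
  rw [phaseDiag, phaseDiag, diagonal_conjTranspose]
  congr 1
  ext i
  rw [Pi.star_apply, Complex.star_def, ← Complex.exp_conj]
  simp

lemma isUnit_phaseDiag (φ : Fin n → ℝ) : IsUnit (phaseDiag φ) :=
  isUnit_iff_exists.2 ⟨phaseDiag (-φ), by rw [phaseDiag_mul, add_neg_cancel, phaseDiag_zero],
    by rw [phaseDiag_mul, neg_add_cancel, phaseDiag_zero]⟩

lemma isUnit_conj {T : Matrix (Fin n) (Fin n) ℂ} (h : IsUnit T) : IsUnit Tᴴ := IsUnit.star h

lemma decomp_isUnit {A T : Matrix (Fin n) (Fin n) ℂ} {φ : Fin n → ℝ}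
    (h : IsSectorialDecomp A T φ) : IsUnit A := by
  rw [h.2]
  exact ((isUnit_conj h.1).mul (isUnit_phaseDiag φ)).mul h.1

lemma inv_mul_unit {T : Matrix (Fin n) (Fin n) ℂ} (h : IsUnit T) : T⁻¹ * T = 1 :=
  Matrix.nonsing_inv_mul T ((Matrix.isUnit_iff_isUnit_det T).1 h)

lemma mul_inv_unit {T : Matrix (Fin n) (Fin n) ℂ} (h : IsUnit T) : T * T⁻¹ = 1 :=
  Matrix.mul_nonsing_inv T ((Matrix.isUnit_iff_isUnit_det T).1 h)

lemma inv_inv_unit {T : Matrix (Fin n) (Fin n) ℂ} (h : IsUnit T) : T⁻¹⁻¹ = T :=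
  Matrix.nonsing_inv_nonsing_inv T ((Matrix.isUnit_iff_isUnit_det T).1 h)

lemma isUnit_inv {T : Matrix (Fin n) (Fin n) ℂ} (h : IsUnit T) : IsUnit T⁻¹ :=
  isUnit_iff_exists.2 ⟨T, inv_mul_unit h, mul_inv_unit h⟩

lemma decomp_inv {A T : Matrix (Fin n) (Fin n) ℂ} {φ : Fin n → ℝ}
    (h : IsSectorialDecomp A T φ) : IsSectorialDecomp A⁻¹ (T⁻¹)ᴴ (-φ) := by
  refine ⟨isUnit_conj (isUnit_inv h.1), ?_⟩
  apply Matrix.inv_eq_right_inv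
  have e1 : T * T⁻¹ = 1 := mul_inv_unit h.1
  have e2 : Tᴴ * (T⁻¹)ᴴ = 1 := by
    rw [← conjTranspose_mul, inv_mul_unit h.1, conjTranspose_one]
  rw [h.2, conjTranspose_conjTranspose]
  calc Tᴴ * phaseDiag φ * T * (T⁻¹ * phaseDiag (-φ) * (T⁻¹)ᴴ)
      = Tᴴ * (phaseDiag φ * (T * T⁻¹) * phaseDiag (-φ)) * (T⁻¹)ᴴ := by
        simp only [Matrix.mul_assoc]
    _ = 1 := by
        rw [e1, Matrix.mul_one, phaseDiag_mul, add_neg_cancel, phaseDiag_zero, Matrix.mul_one, e2]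

lemma phases_inv (hn : 1 ≤ n) {A : Matrix (Fin n) (Fin n) ℂ} (hA : NegativeImaginary A) :
    IsSectorial A⁻¹ ∧ phases A⁻¹ = fun k => - phases A (Fin.rev k) := by
  obtain ⟨a1, s1, -, -, T, d⟩ := phases_spec hn hA.1
  have hp := Real.pi_pos
  obtain ⟨h1, σ, h2, h3⟩ := phases_of_decomp hn (decomp_inv d)
    (fun i j => by have := s1 j i; simp only [Pi.neg_apply]; linarith)
    (fun i => by
      have := (hA.2 i).1; have := (hA.2 i).2
      constructor <;> simp only [Pi.neg_apply] <;> linarith)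
  refine ⟨h1, h3.trans ?_⟩
  have m1 : Monotone (phases A ∘ σ) := fun i j hij => by
    have := h2 hij
    simpa using this
  have m2 : Monotone (phases A ∘ Fin.revPerm) := fun i j hij => a1 (by simpa using hij)
  have := Tuple.unique_monotone m1 m2
  ext k
  have hk := congrFun this k
  simp only [Function.comp, Fin.revPerm_apply] at hk
  simp [hk]

lemma lower_bound (hn : 1 ≤ n) (Φ : (Fin n → ℝ) → ℝ) (hΦ : IsSymmetricGauge Φ)
    (A : Matrix (Fin n) (Fin n) ℂ) (hA : NegativeImaginary A) (r : ℕ)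
    (E : Matrix (Fin n) (Fin n) ℂ) (hE : IsSectorial E) (hEr : prank E ≤ r)
    (hB : NegativeImaginary (E⁻¹ * A * E⁻¹)) :
    (Φ fun k => if (k : ℕ) < n - r then phases A k else 0) ≤ Φ (phases (E⁻¹ * A * E⁻¹)) := by
  obtain ⟨a1, -, -, -, TA, dA⟩ := phases_spec hn hA.1
  obtain ⟨a2, -, -, -, TB, dB⟩ := phases_spec hn hB.1
  obtain ⟨-, -, -, -, T, dE⟩ := phases_spec hn hE
  set ε := phases E with hε
  set S : Finset (Fin n) := Finset.univ.filter (fun k => ε k ≠ 0) with hS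
  have hcard : S.card ≤ r := by
    refine le_trans (le_of_eq ?_) hEr
    rw [prank, ← Set.ncard_coe_finset]
    congr 1
    ext k
    simp [hS, hε]
  have hEu := decomp_isUnit dE
  have hag : ∀ v, (∀ j ∈ S, v j = 0) → qf A (T⁻¹ *ᵥ v) = qf (E⁻¹ * A * E⁻¹) (Tᴴ *ᵥ v) := by
    intro v hv
    have hD : ∀ ε' : Fin n → ℝ, (∀ j, ε j = 0 → ε' j = 0) → phaseDiag ε' *ᵥ v = v := by
      intro ε' h'
      ext j
      rw [phaseDiag, mulVec_diagonal]
      by_cases hj : ε j = 0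
      · rw [h' j hj]; simp
      · rw [hv j (by simp [hS, hj])]; simp
    have hT : T *ᵥ (T⁻¹ *ᵥ v) = v := by rw [mulVec_mulVec, mul_inv_unit dE.1, one_mulVec]
    have h1 : E *ᵥ (T⁻¹ *ᵥ v) = Tᴴ *ᵥ v := by
      rw [dE.2, ← mulVec_mulVec, hT, ← mulVec_mulVec, hD ε (fun _ h => h)]
    have h2 : Eᴴ *ᵥ (T⁻¹ *ᵥ v) = Tᴴ *ᵥ v := by
      rw [dE.2, conjTranspose_mul, conjTranspose_mul, conjTranspose_conjTranspose, phaseDiag_conj,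
        ← mulVec_mulVec, ← mulVec_mulVec, hT, hD (-ε) (fun j h => by simp [h])]
    clear hT
    generalize T⁻¹ *ᵥ v = y at h1 h2 ⊢
    have h3 : (E⁻¹ * A * E⁻¹) *ᵥ (Tᴴ *ᵥ v) = E⁻¹ *ᵥ (A *ᵥ y) := by
      rw [← h1, mulVec_mulVec, Matrix.mul_assoc _ E⁻¹ E, inv_mul_unit hEu, Matrix.mul_one,
        mulVec_mulVec]
    rw [qf, qf, h3, ← h2, star_mulVec, conjTranspose_conjTranspose, ← dotProduct_mulVec,
      mulVec_mulVec, mul_inv_unit hEu, one_mulVec]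
  have hrel : ∀ k k' : Fin n, (k' : ℕ) = k + r → phases (E⁻¹ * A * E⁻¹) k' ≤ phases A k :=
    key dA dB a1 a2 (-Real.pi) (fun i => by simpa using hA.2 i)
      (fun i => by simpa using hB.2 i) (isUnit_inv dE.1) (isUnit_conj dE.1) S r hcard hag
  have : NeZero n := ⟨by omega⟩
  rw [← hΦ.perm (Equiv.addRight (Fin.ofNat n r)) (phases (E⁻¹ * A * E⁻¹))]
  apply gauge_mono hΦ
  intro k
  split_ifs with hk
  · have h := hrel k (Equiv.addRight (Fin.ofNat n r) k) (by
      simp only [Equiv.coe_addRight, Fin.val_add, Fin.val_ofNat]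
      rw [Nat.mod_eq_of_lt (show r < n by omega), Nat.mod_eq_of_lt (by omega)])
    rw [abs_of_nonpos (hA.2 k).2, Function.comp, abs_of_nonpos (hB.2 _).2]
    linarith
  · simp

lemma attained (hn : 1 ≤ n) (Φ : (Fin n → ℝ) → ℝ) (hΦ : IsSymmetricGauge Φ)
    (A : Matrix (Fin n) (Fin n) ℂ) (hA : NegativeImaginary A) (r : ℕ) (hr : r ≤ n)
    (E : Matrix (Fin n) (Fin n) ℂ) (hE : E⁻¹ ∈ Sp A⁻¹ r) :
      IsSectorial E ∧ prank E ≤ r ∧ NegativeImaginary (E⁻¹ * A * E⁻¹) ∧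
      Φ (phases (E⁻¹ * A * E⁻¹)) = Φ fun k => if (k : ℕ) < n - r then phases A k else 0 := by
  obtain ⟨-, hχ⟩ := phases_inv hn hA
  obtain ⟨T, dT, hET⟩ := hE
  have hp := Real.pi_pos
  have hAu : IsUnit A := by
    obtain ⟨-, -, -, -, TA, dA⟩ := phases_spec hn hA.1
    exact decomp_isUnit dA
  set χ := phases A⁻¹ with hχd
  have hχ0 : ∀ k, 0 ≤ χ k := fun k => by rw [hχ]; linarith [(hA.2 (Fin.rev k)).2]
  have hχ1 : ∀ k, χ k < Real.pi := fun k => by rw [hχ]; linarith [(hA.2 (Fin.rev k)).1]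
  set η : Fin n → ℝ := fun k => if (k : ℕ) < r then χ k / 2 else 0 with hη
  have hη0 : ∀ k, 0 ≤ η k := fun k => by
    simp only [hη]; split_ifs
    · linarith [hχ0 k]
    · exact le_rfl
  have hη1 : ∀ k, η k < Real.pi := fun k => by
    simp only [hη]; split_ifs
    · linarith [hχ1 k]
    · exact hp
  have dEi : IsSectorialDecomp E⁻¹ T η := by
    refine ⟨dT.1, hET.trans ?_⟩
    congr 3
    ext k
    simp only [hη]
    split_ifs <;> simp
  have hEu : IsUnit E := by
    have := decomp_isUnit dEi
    rw [Matrix.isUnit_iff_isUnit_det] at this ⊢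
    exact Matrix.isUnit_nonsing_inv_det_iff.1 this
  have dE : IsSectorialDecomp E (T⁻¹)ᴴ (-η) := by
    have := decomp_inv dEi
    rwa [inv_inv_unit hEu] at this
  have dA : IsSectorialDecomp A (T⁻¹)ᴴ (-χ) := by
    have := decomp_inv dT
    rwa [inv_inv_unit hAu] at this
  obtain ⟨sE, σ, -, pE⟩ := phases_of_decomp hn dE
    (fun i j => by simp only [Pi.neg_apply]; linarith [hη0 i, hη1 j])
    (fun i => by constructor <;> simp only [Pi.neg_apply] <;> linarith [hη0 i, hη1 i])
  set ω : Fin n → ℝ := η + -χ + η with hω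
  have hωe : ∀ k, ω k = if (k : ℕ) < r then 0 else phases A (Fin.rev k) := by
    intro k
    simp only [hω, hη, Pi.add_apply, Pi.neg_apply]
    split_ifs
    · ring
    · rw [hχ]; ring
  have hω0 : ∀ k, ω k ∈ Set.Ioc (-Real.pi) 0 := fun k => by
    rw [hωe]; split_ifs
    · exact ⟨by linarith, le_rfl⟩
    · exact hA.2 _
  have dB : IsSectorialDecomp (E⁻¹ * A * E⁻¹) T ω := by
    refine ⟨dT.1, ?_⟩
    have e1 : T * T⁻¹ = 1 := mul_inv_unit dT.1
    have e2 : (T⁻¹)ᴴ * Tᴴ = 1 := by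
      rw [← conjTranspose_mul, e1, conjTranspose_one]
    rw [dEi.2]
    conv_lhs => rw [dA.2]
    rw [conjTranspose_conjTranspose, hω, ← phaseDiag_mul, ← phaseDiag_mul]
    calc Tᴴ * phaseDiag η * T * (T⁻¹ * phaseDiag (-χ) * (T⁻¹)ᴴ) * (Tᴴ * phaseDiag η * T)
        = Tᴴ * phaseDiag η * (T * T⁻¹) * phaseDiag (-χ) * ((T⁻¹)ᴴ * Tᴴ) * phaseDiag η * T := by
          simp only [Matrix.mul_assoc]
      _ = _ := by rw [e1, e2]; simp only [Matrix.mul_assoc, Matrix.one_mul]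
  obtain ⟨sB, τ, -, pB⟩ := phases_of_decomp hn dB
    (fun i j => by linarith [(hω0 i).2, (hω0 j).1])
    (fun i => ⟨(hω0 i).1, (hω0 i).2.trans_lt hp⟩)
  refine ⟨sE, ?_, ⟨sB, fun k => by rw [pB]; exact hω0 _⟩, ?_⟩
  · rw [prank, pE, ← Finset.card_range r, ← Set.ncard_coe_finset]
    refine Set.ncard_le_ncard_of_injOn (fun k => ((σ k : Fin n) : ℕ)) ?_ ?_ (Finset.finite_toSet _)
    · intro k hk
      simp only [Finset.coe_range, Set.mem_Iio]
      by_contra! h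
      apply hk
      simp [hη, not_lt.2 h]
    · intro a _ b _ hab
      exact σ.injective (Fin.ext hab)
  · rw [pB, hΦ.perm, ← hΦ.perm Fin.revPerm ω]
    congr 1
    ext k
    simp only [Function.comp, Fin.revPerm_apply]
    rw [hωe, Fin.rev_rev, Fin.val_rev]
    have := k.2
    by_cases hk : (k : ℕ) < n - r
    · rw [if_pos hk, if_neg (by omega)]
    · rw [if_neg hk, if_pos (by omega)]

lemma exists_mem_Sp (hn : 1 ≤ n) (A : Matrix (Fin n) (Fin n) ℂ) (hA : NegativeImaginary A)
    (r : ℕ) : ∃ E : Matrix (Fin n) (Fin n) ℂ, E⁻¹ ∈ Sp A⁻¹ r := by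
  obtain ⟨-, -, -, -, T, d⟩ := phases_spec hn (phases_inv hn hA).1
  set D : Matrix (Fin n) (Fin n) ℂ := Matrix.diagonal (fun k : Fin n =>
      if (k : ℕ) < r then Complex.exp (Complex.I * ((phases A⁻¹ k / 2 : ℝ) : ℂ)) else 1) with hD
  have hDu : IsUnit D := by
    rw [Matrix.isUnit_iff_isUnit_det, hD, det_diagonal, isUnit_iff_ne_zero,
        Finset.prod_ne_zero_iff]
    intro i _
    split_ifs
    · exact Complex.exp_ne_zero _
    · exact one_ne_zero
  refine ⟨(Tᴴ * D * T)⁻¹, T, d, ?_⟩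
  rw [inv_inv_unit (((isUnit_conj d.1).mul hDu).mul d.1)]

/-- low phase-rank approximation, negative-imaginary case. -/
theorem low_prank_approximation_negative_imaginary
    (hn : 1 ≤ n) (Φ : (Fin n → ℝ) → ℝ) (hΦ : IsSymmetricGauge Φ)
    (A : Matrix (Fin n) (Fin n) ℂ) (hA : NegativeImaginary A)
    (r : ℕ) (hr : r ≤ n) :
    IsLeast {v : ℝ | ∃ E : Matrix (Fin n) (Fin n) ℂ, IsSectorial E ∧ prank E ≤ r ∧
        NegativeImaginary (E⁻¹ * A * E⁻¹) ∧ v = Φ (phases (E⁻¹ * A * E⁻¹))}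
      (Φ fun k => if (k : ℕ) < n - r then phases A k else 0) ∧
    ∀ E : Matrix (Fin n) (Fin n) ℂ, E⁻¹ ∈ Sp A⁻¹ r →
      IsSectorial E ∧ prank E ≤ r ∧ NegativeImaginary (E⁻¹ * A * E⁻¹) ∧
      Φ (phases (E⁻¹ * A * E⁻¹)) = Φ fun k => if (k : ℕ) < n - r then phases A k else 0 := by
  refine ⟨⟨?_, ?_⟩, attained hn Φ hΦ A hA r hr⟩
  · obtain ⟨E, hE⟩ := exists_mem_Sp hn A hA r
    obtain ⟨h1, h2, h3, h4⟩ := attained hn Φ hΦ A hA r hr E hE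
    exact ⟨E, h1, h2, h3, h4.symm⟩
  · rintro v ⟨E, h1, h2, h3, rfl⟩
    exact lower_bound hn Φ hΦ A hA r E h1 h2 h3

end LowPrank
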